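/- For every integer k ≥ 10, every ε > 0 and every N, there exists an input list L such that OPT(L) ≥ N and FF(L) ≥ (2.7 − 3/k − ε)·OPT(L), where FF is First Fit with cardinality constraint k. Consequently, the asymptotic competitive ratio of First Fit for k ≥ 10 is at least 2.7 − 3/k. -/

import Mathlib

/-!
Tiny items are prepended to the classical input that forces First Fit to use `1.7` times the optimal
number of bins. First Fit receives, with `m + 1` blocks and perturbations `δ i` that decrease
geometrically,

* `10 (m + 1) (k - 3)` tiny items, which it packs `k` to a bin;
* for each block `i`, two groups of four items `1/6 - δ i` and one item `1/6 + 6 δ i`;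
* for each block `i`, five groups consisting of `1/3 + 21 δ i` and `1/3 - 7 δ i`;
* `10 (m + 1)` items slightly larger than `1/2`.

The groups have sizes `5/6 + 2 δ i`, `2/3 + 14 δ i` and more than `1/2`, which leaves no room for
any later item, so each group gets a bin of its own: `10 (m + 1) (1 - 3/k) + 17 (m + 1)` bins in
total.

A good packing puts with each large item a pair from `(1/6 + 6 δ i, 1/3 - 7 δ i)`,
`(1/6 - δ i, 1/3 - 7 δ i)`, `(1/6 - δ i, 1/3 + 21 δ (i + 1))`, in proportions `2 : 3 : 5`. Every
pair has size at most `1/2 - δ m`, so the bin has room for `k - 3` tiny items. The shift from `i` to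
`i + 1` in the last kind of pair leaves over only the five items `1/3 + 21 δ 0`, and counting items
shows that fewer than `10 (m + 1)` bins never suffice.
-/

open scoped Classical
noncomputable section

/-- An input is a list of item sizes, each in (0,1]. -/
def ValidInput (L : List ℝ) : Prop := ∀ x ∈ L, 0 < x ∧ x ≤ 1

/-- A packing assigns a bin index to each item; it is feasible for cardinality
constraint `k` if every bin receives at most `k` items of total size at most 1. -/
def IsFeasible (k : ℕ) (L : List ℝ) (f : Fin L.length → ℕ) : Prop :=
  ∀ b : ℕ,
    (Finset.univ.filter (fun i => f i = b)).card ≤ k ∧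
    ∑ i ∈ Finset.univ.filter (fun i => f i = b), L.get i ≤ 1

/-- The number of bins used by a packing. -/
def binsUsed (L : List ℝ) (f : Fin L.length → ℕ) : ℕ :=
  (Finset.univ.image f).card

/-- The optimal (minimum) number of bins in a feasible packing of `L`. -/
def OPT (k : ℕ) (L : List ℝ) : ℕ :=
  sInf {n | ∃ f : Fin L.length → ℕ, IsFeasible k L f ∧ binsUsed L f = n}

/-- A deterministic online algorithm is a strategy: given the items seen so far
(ending with the item to be packed), it returns the bin index for that item. -/
def onlinePacking (A : List ℝ → ℕ) (L : List ℝ) : Fin L.length → ℕ :=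
  fun i => A (L.take (i.1 + 1))

/-- The strategy `A` is a valid online algorithm for cardinality constraint `k`
if on every valid input the induced packing is feasible. -/
def OnlineValid (k : ℕ) (A : List ℝ → ℕ) : Prop :=
  ∀ L : List ℝ, ValidInput L → IsFeasible k L (onlinePacking A L)

/-- The number of bins used by online algorithm `A` on input `L`. -/
def onlineBins (A : List ℝ → ℕ) (L : List ℝ) : ℕ :=
  binsUsed L (onlinePacking A L)

/-- The state of First Fit: a list of open bins (in order of opening),
each recorded as (number of items, total size). `ffFind` returns the index of
the first bin that can receive an item of size `x` (it has at most `k-1` items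
and the item fits); if none, the index of a new bin. -/
def ffFind (k : ℕ) (x : ℝ) : List (ℕ × ℝ) → ℕ
  | [] => 0
  | b :: bs => if b.1 < k ∧ b.2 + x ≤ 1 then 0 else ffFind k x bs + 1

/-- Update the First Fit state after packing an item of size `x`. -/
def ffUpdate (k : ℕ) (x : ℝ) : List (ℕ × ℝ) → List (ℕ × ℝ)
  | [] => [(1, x)]
  | b :: bs =>
      if b.1 < k ∧ b.2 + x ≤ 1 then (b.1 + 1, b.2 + x) :: bs
      else b :: ffUpdate k x bs

/-- The final state of First Fit with cardinality constraint `k` on input `L`. -/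
def ffState (k : ℕ) (L : List ℝ) : List (ℕ × ℝ) :=
  L.foldl (fun bs x => ffUpdate k x bs) []

/-- The number of bins used by First Fit with cardinality constraint `k` on `L`. -/
def FF (k : ℕ) (L : List ℝ) : ℕ := (ffState k L).length

/-- The bin index into which First Fit packs the `i`-th item of `L`. -/
def ffAssign (k : ℕ) (L : List ℝ) (i : Fin L.length) : ℕ :=
  ffFind k (L.get i) (ffState k (L.take i.1))

/-! ### First Fit on a concatenation of groups -/

/-- A First Fit bin, recorded as (number of items, total size), can still receive an item of
size `x`. -/
def Fits (k : ℕ) (b : ℕ × ℝ) (x : ℝ) : Prop := b.1 < k ∧ b.2 + x ≤ 1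

lemma ffUpdate_append_of_not_fits {k : ℕ} {x : ℝ} {S : List (ℕ × ℝ)}
    (hS : ∀ b ∈ S, ¬ Fits k b x) (T : List (ℕ × ℝ)) :
    ffUpdate k x (S ++ T) = S ++ ffUpdate k x T := by
  induction S with
  | nil => rfl
  | cons b S ih =>
    rw [List.forall_mem_cons] at hS
    rw [List.cons_append, ffUpdate, if_neg (by exact hS.1), ih hS.2, List.cons_append]

lemma ffState_concat (k : ℕ) (L : List ℝ) (x : ℝ) :
    ffState k (L ++ [x]) = ffUpdate k x (ffState k L) :=
  List.foldl_concat ..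

lemma ffState_append_of_not_fits {k : ℕ} {L l : List ℝ} (hne : l ≠ []) (hpos : ∀ x ∈ l, 0 < x)
    (hk : l.length ≤ k) (hsum : l.sum ≤ 1) (hL : ∀ x ∈ l, ∀ b ∈ ffState k L, ¬ Fits k b x) :
    ffState k (L ++ l) = ffState k L ++ [(l.length, l.sum)] := by
  induction l using List.reverseRecOn with
  | nil => exact absurd rfl hne
  | append_singleton l x ih =>
    simp only [List.forall_mem_append, List.forall_mem_singleton, List.length_append,
      List.length_singleton, List.sum_append, List.sum_singleton] at hpos hk hsum hL ⊢
    rw [← List.append_assoc, ffState_concat]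
    rcases eq_or_ne l [] with rfl | hl
    · simpa [ffUpdate] using ffUpdate_append_of_not_fits hL.2 []
    · have hx : l.length < k ∧ l.sum + x ≤ 1 := ⟨hk, hsum⟩
      rw [ih hl hpos.1 (by omega) (by linarith [hpos.2]) hL.1,
        ffUpdate_append_of_not_fits hL.2, ffUpdate, if_pos hx]

/-- A nonempty list of items that can share one bin. -/
structure IsBin (k : ℕ) (l : List ℝ) : Prop where
  ne_nil : l ≠ []
  pos : ∀ x ∈ l, 0 < x
  length_le : l.length ≤ k
  sum_le_one : l.sum ≤ 1

/-- No item of `l'` fits into a bin that contains exactly the items of `l`. -/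
def Blocks (k : ℕ) (l l' : List ℝ) : Prop := ∀ x ∈ l', ¬ Fits k (l.length, l.sum) x

lemma blocks_of_length_eq {k : ℕ} {l : List ℝ} (h : l.length = k) (l' : List ℝ) :
    Blocks k l l' :=
  fun _ _ hx => hx.1.ne h

lemma blocks_of_one_lt_sum_add {k : ℕ} {l l' : List ℝ} (h : ∀ x ∈ l', 1 < l.sum + x) :
    Blocks k l l' :=
  fun x hx hfit => (h x hx).not_ge hfit.2

lemma validInput_flatten {k : ℕ} {G : List (List ℝ)} (hG : ∀ l ∈ G, IsBin k l) :
    ValidInput G.flatten := by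
  intro x hx
  obtain ⟨l, hl, hxl⟩ := List.mem_flatten.mp hx
  have hle : x ≤ l.sum := List.single_le_sum (fun y hy => ((hG l hl).pos y hy).le) x hxl
  exact ⟨(hG l hl).pos x hxl, hle.trans (hG l hl).sum_le_one⟩

lemma ffState_flatten {k : ℕ} {G : List (List ℝ)} (hG : ∀ l ∈ G, IsBin k l)
    (hblocks : G.Pairwise (Blocks k)) :
    ffState k G.flatten = G.map fun l => (l.length, l.sum) := by
  induction G using List.reverseRecOn with
  | nil => rfl
  | append_singleton G l ih =>
    rw [List.forall_mem_append, List.forall_mem_singleton] at hG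
    obtain ⟨hblocksG, -, hl⟩ := List.pairwise_append.mp hblocks
    have hstate := ih hG.1 hblocksG
    rw [List.flatten_append, List.flatten_singleton,
      ffState_append_of_not_fits hG.2.ne_nil hG.2.pos hG.2.length_le hG.2.sum_le_one, hstate,
      List.map_append, List.map_singleton]
    rw [hstate]
    simp only [List.forall_mem_map]
    exact fun x hx l' hl' => hl l' hl' l (List.mem_singleton_self l) x hx

lemma FF_flatten {k : ℕ} {G : List (List ℝ)} (hG : ∀ l ∈ G, IsBin k l)
    (hblocks : G.Pairwise (Blocks k)) : FF k G.flatten = G.length := by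
  rw [FF, ffState_flatten hG hblocks, List.length_map]

/-! ### Bounds on the optimum -/

/-- `s` splits into `n` bins, possibly empty, of at most `k` items and total size at most `c`. -/
def Packs (k : ℕ) (c : ℝ) (s : Multiset ℝ) (n : ℕ) : Prop :=
  ∃ C : Multiset (Multiset ℝ), C.card = n ∧ C.sum = s ∧ ∀ b ∈ C, b.card ≤ k ∧ b.sum ≤ c

namespace Packs

variable {k m n : ℕ} {c : ℝ} {s t : Multiset ℝ}

lemma add (hs : Packs k c s m) (ht : Packs k c t n) : Packs k c (s + t) (m + n) := by
  obtain ⟨C, rfl, rfl, hC⟩ := hs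
  obtain ⟨D, rfl, rfl, hD⟩ := ht
  exact ⟨C + D, Multiset.card_add .., Multiset.sum_add ..,
    fun b hb => (Multiset.mem_add.mp hb).elim (hC b) (hD b)⟩

lemma nsmul (n : ℕ) (hk : s.card ≤ k) (hc : s.sum ≤ c) : Packs k c (n • s) n := by
  refine ⟨Multiset.replicate n s, Multiset.card_replicate .., Multiset.sum_replicate ..,
    fun b hb => ?_⟩
  rw [Multiset.eq_of_mem_replicate hb]
  exact ⟨hk, hc⟩

lemma sum {s : ℕ → Multiset ℝ} (h : ∀ i < n, Packs k c (s i) m) :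
    Packs k c (∑ i ∈ Finset.range n, s i) (n * m) := by
  induction n with
  | zero => exact ⟨0, by simp⟩
  | succ n ih =>
    rw [Finset.sum_range_succ, Nat.succ_mul]
    exact (ih fun i hi => h i (hi.trans n.lt_succ_self)).add (h n n.lt_succ_self)

lemma add_nsmul_singleton {d x : ℝ} (r : ℕ) (h : Packs k c s n) (hd : c + r * x ≤ d) :
    Packs (k + r) d (s + (n * r) • {x}) n := by
  obtain ⟨C, rfl, rfl, hC⟩ := h
  refine ⟨C.map (· + r • {x}), Multiset.card_map .., by simp [mul_nsmul'], fun b' hb' => ?_⟩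
  obtain ⟨b, hb, rfl⟩ := Multiset.mem_map.mp hb'
  obtain ⟨hcard, hsum⟩ := hC b hb
  have hsum' : b.sum + r * x ≤ d := by linarith
  simpa [Multiset.sum_nsmul] using And.intro hcard hsum'

end Packs

lemma exists_add_of_map_eq_add {ι α : Type*} {v : ι → α} {u : Multiset ι} {s t : Multiset α}
    (h : u.map v = s + t) : ∃ u₁ u₂, u = u₁ + u₂ ∧ u₁.map v = s ∧ u₂.map v = t := by
  rw [← Multiset.rel_eq, Multiset.rel_map_left, Multiset.rel_add_right] at h
  obtain ⟨u₁, u₂, h₁, h₂, rfl⟩ := h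
  exact ⟨u₁, u₂, rfl, Multiset.rel_eq.mp (Multiset.rel_map_left.mpr h₁),
    Multiset.rel_eq.mp (Multiset.rel_map_left.mpr h₂)⟩

lemma exists_fibers_of_map_eq_sum {ι α : Type*} {v : ι → α} {u : Multiset ι} (hu : u.Nodup)
    {C : Multiset (Multiset α)} (h : u.map v = C.sum) :
    ∃ f : ι → ℕ, (∀ i ∈ u, f i < C.card) ∧ ∀ j, (u.filter (f · = j)).map v ∈ 0 ::ₘ C := by
  induction C using Multiset.induction generalizing u with
  | empty =>
    obtain rfl : u = 0 := by simpa using h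
    exact ⟨0, by simp⟩
  | cons b C ih =>
    rw [Multiset.sum_cons] at h
    obtain ⟨u₁, u₂, rfl, rfl, h₂⟩ := exists_add_of_map_eq_add h
    obtain ⟨-, hu₂, hdisj⟩ := Multiset.nodup_add.mp hu
    obtain ⟨f, hlt, hfib⟩ := ih hu₂ h₂
    set g : ι → ℕ := fun i => if i ∈ u₁ then C.card else f i
    have hg₁ : ∀ i ∈ u₁, g i = C.card := fun i hi => if_pos hi
    have hg₂ : ∀ i ∈ u₂, g i = f i := fun i hi =>
      if_neg (Multiset.disjoint_right.mp hdisj hi)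
    refine ⟨g, fun i hi => ?_, fun j => ?_⟩
    · rw [Multiset.card_cons]
      rcases Multiset.mem_add.mp hi with hi | hi
      · exact (hg₁ i hi).trans_lt C.card.lt_succ_self
      · exact (hg₂ i hi).trans_lt ((hlt i hi).trans C.card.lt_succ_self)
    · rw [Multiset.filter_add, Multiset.filter_congr fun i hi => by rw [hg₁ i hi],
        Multiset.filter_congr (s := u₂) fun i hi => by rw [hg₂ i hi]]
      rcases eq_or_ne j C.card with rfl | hj
      · have hf : u₂.filter (f · = C.card) = 0 :=
          Multiset.filter_eq_nil.mpr fun i hi => (hlt i hi).ne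
        simp [hf]
      · have hsub : 0 ::ₘ C ⊆ 0 ::ₘ u₁.map v ::ₘ C :=
          Multiset.cons_subset_cons (Multiset.subset_cons C _)
        simpa [hj.symm] using hsub (hfib j)

lemma exists_isFeasible_of_packs {k n : ℕ} {L : List ℝ} (h : Packs k 1 (L : Multiset ℝ) n) :
    ∃ f, IsFeasible k L f ∧ binsUsed L f ≤ n := by
  obtain ⟨C, rfl, hL, hC⟩ := h
  have hget : (Finset.univ : Finset (Fin L.length)).val.map L.get = C.sum := by
    rw [hL, Fin.univ_val_map, List.ofFn_get]
  obtain ⟨f, hlt, hfib⟩ := exists_fibers_of_map_eq_sum Finset.univ.nodup hget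
  refine ⟨f, fun j => ?_, ?_⟩
  · have hbin : ∀ b ∈ 0 ::ₘ C, b.card ≤ k ∧ b.sum ≤ 1 := by simpa using hC
    obtain ⟨hcard, hsum⟩ := hbin _ (hfib j)
    rw [Multiset.card_map] at hcard
    exact ⟨hcard, hsum⟩
  · calc binsUsed L f ≤ (Finset.range C.card).card :=
          Finset.card_le_card (by simpa [Finset.image_subset_iff] using hlt)
      _ = C.card := Finset.card_range _

lemma OPT_le_of_packs {k n : ℕ} {L : List ℝ} (h : Packs k 1 (L : Multiset ℝ) n) :
    OPT k L ≤ n := by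
  obtain ⟨f, hf, hn⟩ := exists_isFeasible_of_packs h
  exact (Nat.sInf_le (Set.mem_ofPred.mpr ⟨f, hf, rfl⟩)).trans hn

lemma packs_length_of_validInput {k : ℕ} {L : List ℝ} (hk : 0 < k) (hL : ValidInput L) :
    Packs k 1 (L : Multiset ℝ) L.length := by
  refine ⟨(L : Multiset ℝ).map ({·}), by simp, Multiset.sum_map_singleton _, fun b hb => ?_⟩
  obtain ⟨x, hx, rfl⟩ := Multiset.mem_map.mp hb
  exact ⟨hk, (Multiset.sum_singleton x).trans_le (hL x hx).2⟩

lemma exists_isFeasible_binsUsed_eq_OPT {k : ℕ} {L : List ℝ} (hk : 0 < k) (hL : ValidInput L) :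
    ∃ f, IsFeasible k L f ∧ binsUsed L f = OPT k L := by
  obtain ⟨f, hf, -⟩ := exists_isFeasible_of_packs (packs_length_of_validInput hk hL)
  exact Nat.sInf_mem (s := {n | ∃ f, IsFeasible k L f ∧ binsUsed L f = n}) ⟨_, f, hf, rfl⟩

lemma length_le_mul_OPT {k : ℕ} {L : List ℝ} (hk : 0 < k) (hL : ValidInput L) :
    L.length ≤ k * OPT k L := by
  obtain ⟨f, hf, hOPT⟩ := exists_isFeasible_binsUsed_eq_OPT hk hL
  rw [← hOPT, binsUsed]
  simpa using Finset.card_le_mul_card_image (f := f) Finset.univ k fun j _ => (hf j).1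

/-! ### The adversarial input -/

/-- The perturbation of the `i`-th block of the input. The ratio `22` leaves
`21 δ (i + 1) - δ i ≤ - δ (i + 1)`, and the start `22⁻²` makes all perturbations smaller than
`1 / 42`. -/
def δ (i : ℕ) : ℝ := (1 / 22) ^ (i + 2)

lemma δ_pos (i : ℕ) : 0 < δ i := by unfold δ; positivity

lemma δ_succ (i : ℕ) : 22 * δ (i + 1) = δ i := by unfold δ; ring

lemma δ_antitone : Antitone δ :=
  antitone_nat_of_succ_le fun i => by linarith [δ_succ i, δ_pos (i + 1)]

lemma δ_le (i : ℕ) : δ i ≤ 1 / 484 :=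
  (δ_antitone i.zero_le).trans_eq (by norm_num [δ])

/-- Five items near `1 / 6` with perturbation `d`. -/
def sixths (d : ℝ) : List ℝ := [1 / 6 - d, 1 / 6 - d, 1 / 6 - d, 1 / 6 - d, 1 / 6 + 6 * d]

/-- Two items near `1 / 3` with perturbation `d`. -/
def thirds (d : ℝ) : List ℝ := [1 / 3 + 21 * d, 1 / 3 - 7 * d]

lemma sum_sixths (d : ℝ) : (sixths d).sum = 5 / 6 + 2 * d := by
  simp only [sixths, List.sum_cons, List.sum_nil]; ring

lemma sum_thirds (d : ℝ) : (thirds d).sum = 2 / 3 + 14 * d := by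
  simp only [thirds, List.sum_cons, List.sum_nil]; ring

lemma le_of_mem_sixths {d x : ℝ} (hd : 0 ≤ d) (hx : x ∈ sixths d) : 1 / 6 - d ≤ x := by
  simp only [sixths, List.mem_cons, List.not_mem_nil, or_false] at hx
  rcases hx with rfl | rfl | rfl | rfl | rfl <;> linarith

lemma le_of_mem_thirds {d x : ℝ} (hd : 0 ≤ d) (hx : x ∈ thirds d) : 1 / 3 - 7 * d ≤ x := by
  simp only [thirds, List.mem_cons, List.not_mem_nil, or_false] at hx
  rcases hx with rfl | rfl <;> linarith

section Bins

variable {k : ℕ} {d x : ℝ}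

lemma isBin_replicate (hk : 0 < k) (hx : 0 < x) (hkx : k * x ≤ 1) :
    IsBin k (List.replicate k x) where
  ne_nil := by simpa using hk.ne'
  pos _ hy := (List.eq_of_mem_replicate hy).symm ▸ hx
  length_le := by simp
  sum_le_one := by simpa using hkx

lemma isBin_sixths (hk : 5 ≤ k) (hd : 0 ≤ d) (hd' : d ≤ 1 / 12) : IsBin k (sixths d) where
  ne_nil := by simp [sixths]
  pos _ hx := by linarith [le_of_mem_sixths hd hx]
  length_le := hk
  sum_le_one := by linarith [sum_sixths d]

lemma isBin_thirds (hk : 2 ≤ k) (hd : 0 ≤ d) (hd' : d ≤ 1 / 42) : IsBin k (thirds d) where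
  ne_nil := by simp [thirds]
  pos _ hx := by linarith [le_of_mem_thirds hd hx]
  length_le := hk
  sum_le_one := by linarith [sum_thirds d]

lemma isBin_singleton (hk : 1 ≤ k) (hx : 0 < x) (hx' : x ≤ 1) : IsBin k [x] where
  ne_nil := by simp
  pos := by simpa using hx
  length_le := hk
  sum_le_one := by simpa using hx'

lemma blocks_sixths {l : List ℝ} (h : ∀ x ∈ l, 1 / 6 - 2 * d < x) : Blocks k (sixths d) l :=
  blocks_of_one_lt_sum_add fun x hx => by linarith [h x hx, sum_sixths d]

lemma blocks_thirds {l : List ℝ} (h : ∀ x ∈ l, 1 / 3 - 14 * d < x) : Blocks k (thirds d) l :=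
  blocks_of_one_lt_sum_add fun x hx => by linarith [h x hx, sum_thirds d]

lemma blocks_singleton {l : List ℝ} (h : ∀ y ∈ l, 1 - x < y) : Blocks k [x] l :=
  blocks_of_one_lt_sum_add fun y hy => by linarith [h y hy, List.sum_singleton (x := x)]

end Bins

/-- The groups of items near `1 / 6`: two for each block. -/
def sixthGroups (M : ℕ) : List (List ℝ) :=
  (List.range M).flatMap fun i => List.replicate 2 (sixths (δ i))

/-- The groups of items near `1 / 3`: five for each block. -/
def thirdGroups (M : ℕ) : List (List ℝ) :=
  (List.range M).flatMap fun i => List.replicate 5 (thirds (δ i))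

/-- The classical lower-bound input for First Fit with `M` blocks and large items of size `h`, as
the list of groups that First Fit packs together. -/
def classicalGroups (M : ℕ) (h : ℝ) : List (List ℝ) :=
  sixthGroups M ++ (thirdGroups M ++ List.replicate (10 * M) [h])

/-- The classical input preceded by `p` groups of `k` tiny items of size `t`. -/
def inputGroups (k p M : ℕ) (t h : ℝ) : List (List ℝ) :=
  List.replicate p (List.replicate k t) ++ classicalGroups M h

lemma exists_eq_sixths_of_mem {M : ℕ} {l : List ℝ} (hl : l ∈ sixthGroups M) :
    ∃ i, l = sixths (δ i) := by
  obtain ⟨i, -, hi⟩ := List.mem_flatMap.mp hl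
  exact ⟨i, List.eq_of_mem_replicate hi⟩

lemma exists_eq_thirds_of_mem {M : ℕ} {l : List ℝ} (hl : l ∈ thirdGroups M) :
    ∃ i, l = thirds (δ i) := by
  obtain ⟨i, -, hi⟩ := List.mem_flatMap.mp hl
  exact ⟨i, List.eq_of_mem_replicate hi⟩

lemma isBin_of_mem_inputGroups {k p M : ℕ} {t h : ℝ} (hk : 5 ≤ k) (ht : 0 < t) (hkt : k * t ≤ 1)
    (hh : 0 < h) (hh' : h ≤ 1) : ∀ l ∈ inputGroups k p M t h, IsBin k l := by
  simp only [inputGroups, classicalGroups, List.mem_append]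
  rintro l (hl | hl | hl | hl)
  · rw [List.eq_of_mem_replicate hl]
    exact isBin_replicate (by omega) ht hkt
  · obtain ⟨i, rfl⟩ := exists_eq_sixths_of_mem hl
    exact isBin_sixths hk (δ_pos i).le (by linarith [δ_le i])
  · obtain ⟨i, rfl⟩ := exists_eq_thirds_of_mem hl
    exact isBin_thirds (by omega) (δ_pos i).le (by linarith [δ_le i])
  · rw [List.eq_of_mem_replicate hl]
    exact isBin_singleton (by omega) hh hh'

lemma pairwise_flatMap_range_replicate {α : Type*} {R : α → α → Prop} {g : ℕ → α}
    (h : ∀ i j, i ≤ j → R (g i) (g j)) (n M : ℕ) :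
    ((List.range M).flatMap fun i => List.replicate n (g i)).Pairwise R := by
  refine List.pairwise_flatMap.mpr
    ⟨fun i _ => List.pairwise_replicate.mpr (.inr (h i i le_rfl)),
      List.pairwise_lt_range.imp fun hij x hx y hy => ?_⟩
  rw [List.eq_of_mem_replicate hx, List.eq_of_mem_replicate hy]
  exact h _ _ hij.le

lemma pairwise_blocks_sixthGroups (k M : ℕ) : (sixthGroups M).Pairwise (Blocks k) :=
  pairwise_flatMap_range_replicate (fun i j hij => blocks_sixths fun x hx => by
    linarith [le_of_mem_sixths (δ_pos j).le hx, δ_antitone hij, δ_pos i]) 2 M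

lemma pairwise_blocks_thirdGroups (k M : ℕ) : (thirdGroups M).Pairwise (Blocks k) :=
  pairwise_flatMap_range_replicate (fun i j hij => blocks_thirds fun x hx => by
    linarith [le_of_mem_thirds (δ_pos j).le hx, δ_antitone hij, δ_pos i]) 5 M

lemma pairwise_blocks_classicalGroups {k M : ℕ} {h : ℝ} (hh : 1 / 2 < h) :
    (classicalGroups M h).Pairwise (Blocks k) := by
  have hhalf : ∀ x ∈ [h], 1 / 2 < x := by simpa using hh
  refine List.pairwise_append.mpr ⟨pairwise_blocks_sixthGroups k M, List.pairwise_append.mpr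
    ⟨pairwise_blocks_thirdGroups k M, List.pairwise_replicate.mpr (.inr ?_), ?_⟩, ?_⟩
  · exact blocks_singleton fun x hx => by linarith [hhalf x hx]
  · intro l hl l' hl'
    obtain ⟨i, rfl⟩ := exists_eq_thirds_of_mem hl
    rw [List.eq_of_mem_replicate hl']
    exact blocks_thirds fun x hx => by linarith [hhalf x hx, δ_pos i]
  · intro l hl l' hl'
    obtain ⟨i, rfl⟩ := exists_eq_sixths_of_mem hl
    refine blocks_sixths fun x hx => ?_
    rcases List.mem_append.mp hl' with hl' | hl'
    · obtain ⟨j, rfl⟩ := exists_eq_thirds_of_mem hl'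
      linarith [le_of_mem_thirds (δ_pos j).le hx, δ_le j, δ_pos i]
    · rw [List.eq_of_mem_replicate hl'] at hx
      linarith [hhalf x hx, δ_pos i]

lemma pairwise_blocks_inputGroups {k p M : ℕ} {t h : ℝ} (hh : 1 / 2 < h) :
    (inputGroups k p M t h).Pairwise (Blocks k) := by
  have htiny : ∀ l, Blocks k (List.replicate k t) l := blocks_of_length_eq List.length_replicate
  refine List.pairwise_append.mpr ⟨List.pairwise_replicate.mpr (.inr (htiny _)),
    pairwise_blocks_classicalGroups hh, fun l hl l' _ => ?_⟩
  rw [List.eq_of_mem_replicate hl]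
  exact htiny l'

lemma length_inputGroups (k p M : ℕ) (t h : ℝ) :
    (inputGroups k p M t h).length = p + 17 * M := by
  simp only [inputGroups, classicalGroups, sixthGroups, thirdGroups, List.length_append,
    List.length_replicate, List.length_flatMap, List.map_const', List.length_range,
    List.sum_replicate, smul_eq_mul]
  ring

lemma coe_flatten_flatMap_range_replicate {α : Type*} (g : ℕ → List α) (n M : ℕ) :
    ((((List.range M).flatMap fun i => List.replicate n (g i)).flatten : List α) : Multiset α)
      = ∑ i ∈ Finset.range M, n • (g i : Multiset α) := by
  have hrep (l : List α) : ((List.replicate n l).flatten : Multiset α) = n • (l : Multiset α) := by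
    induction n with
    | zero => simp
    | succ n ih =>
      rw [List.replicate_succ, List.flatten_cons, ← Multiset.coe_add, ih, succ_nsmul']
  induction M with
  | zero => simp
  | succ M ih =>
    rw [List.range_succ, List.flatMap_append, List.flatten_append, ← Multiset.coe_add, ih,
      List.flatMap_singleton, hrep, Finset.sum_range_succ]

lemma length_flatten_classicalGroups (M : ℕ) (h : ℝ) :
    (classicalGroups M h).flatten.length = 30 * M := by
  rw [classicalGroups, sixthGroups, thirdGroups, List.flatten_append, List.flatten_append,
    ← Multiset.coe_card, ← Multiset.coe_add, ← Multiset.coe_add,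
    coe_flatten_flatMap_range_replicate, coe_flatten_flatMap_range_replicate]
  simp only [sixths, thirds, List.flatten_replicate_singleton, Multiset.card_add,
    Multiset.card_sum, Multiset.card_nsmul, Multiset.coe_card, List.length_cons, List.length_nil,
    Finset.sum_const, Finset.card_range, smul_eq_mul, List.length_replicate]
  ring

lemma length_flatten_inputGroups (k p M : ℕ) (t h : ℝ) :
    (inputGroups k p M t h).flatten.length = p * k + 30 * M := by
  rw [inputGroups, List.flatten_append, List.length_append, List.flatten_replicate_replicate,
    List.length_replicate, length_flatten_classicalGroups]

/-! ### A near-optimal packing of the input -/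

/-- The contents of `10 (m + 1)` bins, each with one large item of size `h` and at most two
others, that take up all items of the classical input with `m + 1` blocks except the five largest
ones near `1 / 3`. -/
def tripleBins (m : ℕ) (h : ℝ) : Multiset ℝ :=
  ∑ i ∈ Finset.range (m + 1),
      (2 • {h, 1 / 6 + 6 * δ i, 1 / 3 - 7 * δ i} + 3 • {h, 1 / 6 - δ i, 1 / 3 - 7 * δ i})
    + ∑ i ∈ Finset.range m, 5 • {h, 1 / 6 - δ i, 1 / 3 + 21 * δ (i + 1)}
    + 5 • {h, 1 / 6 - δ m}

lemma packs_tripleBins {m : ℕ} {h c : ℝ} (hc : 1 / 2 - δ m + h ≤ c) :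
    Packs 3 c (tripleBins m h) (10 * (m + 1)) := by
  have hδ : ∀ i < m + 1, δ m ≤ δ i := fun i hi => δ_antitone (Nat.lt_succ_iff.mp hi)
  have triple (n : ℕ) {x y : ℝ} (hxy : x + y ≤ 1 / 2 - δ m) : Packs 3 c (n • {h, x, y}) n :=
    Packs.nsmul n (by simp) (by
      simp only [Multiset.insert_eq_cons, Multiset.sum_cons, Multiset.sum_singleton]
      linarith)
  have hfirst := Packs.sum fun i (hi : i < m + 1) =>
    (triple 2 (x := 1 / 6 + 6 * δ i) (y := 1 / 3 - 7 * δ i) (by linarith [hδ i hi])).add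
      (triple 3 (x := 1 / 6 - δ i) (y := 1 / 3 - 7 * δ i)
        (by linarith [hδ i hi, δ_pos i]))
  have hsecond := Packs.sum fun i (hi : i < m) =>
    triple 5 (x := 1 / 6 - δ i) (y := 1 / 3 + 21 * δ (i + 1))
      (by linarith [hδ (i + 1) (by omega), δ_succ i])
  have hlast : Packs 3 c (5 • {h, 1 / 6 - δ m}) 5 :=
    Packs.nsmul 5 (by simp) (by
      simp only [Multiset.insert_eq_cons, Multiset.sum_cons, Multiset.sum_singleton]
      linarith)
  have hcount : 10 * (m + 1) = (m + 1) * (2 + 3) + m * 5 + 5 := by ring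
  exact hcount ▸ (hfirst.add hsecond).add hlast

lemma coe_flatten_classicalGroups (m : ℕ) (h : ℝ) :
    ((classicalGroups (m + 1) h).flatten : Multiset ℝ)
      = tripleBins m h + 5 • {1 / 3 + 21 * δ 0} := by
  have hsixths (i : ℕ) : (sixths (δ i) : Multiset ℝ)
      = 4 • {1 / 6 - δ i} + {1 / 6 + 6 * δ i} := rfl
  have hthirds (i : ℕ) : (thirds (δ i) : Multiset ℝ)
      = {1 / 3 + 21 * δ i} + {1 / 3 - 7 * δ i} := rfl
  have hhalf : ((List.replicate (10 * (m + 1)) [h]).flatten : Multiset ℝ)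
      = (10 * (m + 1)) • {h} := by
    rw [← List.replicate_one, List.flatten_replicate_replicate, mul_one, Multiset.coe_replicate,
      Multiset.nsmul_singleton]
  rw [classicalGroups, sixthGroups, thirdGroups, List.flatten_append, List.flatten_append,
    ← Multiset.coe_add, ← Multiset.coe_add, coe_flatten_flatMap_range_replicate,
    coe_flatten_flatMap_range_replicate, hhalf]
  simp only [tripleBins, hsixths, hthirds, Multiset.insert_eq_cons, ← Multiset.singleton_add,
    nsmul_add, Finset.sum_add_distrib]
  rw [Finset.sum_range_succ' (fun i => 5 • ({1 / 3 + 21 * δ i} : Multiset ℝ)),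
    Finset.sum_range_succ (fun i => 3 • ({1 / 6 - δ i} : Multiset ℝ)),
    Finset.sum_range_succ (fun i => 2 • 4 • ({1 / 6 - δ i} : Multiset ℝ))]
  simp only [Finset.sum_const, Finset.card_range, Finset.sum_nsmul]
  module

lemma packs_flatten_inputGroups {r p m : ℕ} {t h : ℝ} (hp : p * (r + 3) = 10 * (m + 1) * r)
    (hth : h + r * t ≤ 1 / 2 + δ m) :
    Packs (r + 3) 1 ((inputGroups (r + 3) p (m + 1) t h).flatten : Multiset ℝ)
      (10 * (m + 1) + 5) := by
  have htiny : ((List.replicate p (List.replicate (r + 3) t)).flatten : Multiset ℝ)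
      = (10 * (m + 1) * r) • {t} := by
    rw [List.flatten_replicate_replicate, Multiset.coe_replicate, hp, Multiset.nsmul_singleton]
  have hmost : Packs (3 + r) 1 (tripleBins m h + (10 * (m + 1) * r) • {t}) (10 * (m + 1)) :=
    (packs_tripleBins le_rfl).add_nsmul_singleton r (by linarith)
  have hrest : Packs (3 + r) 1 (5 • {1 / 3 + 21 * δ 0}) 5 :=
    Packs.nsmul 5 (by rw [Multiset.card_singleton]; omega)
      (by rw [Multiset.sum_singleton]; linarith [δ_le 0])
  rw [inputGroups, List.flatten_append, ← Multiset.coe_add, htiny, coe_flatten_classicalGroups,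
    ← add_assoc, add_comm (_ • _), add_comm r]
  exact hmost.add hrest

/-! ### The lower bound -/

theorem exists_validInput_FF_eq {k q : ℕ} (hk : 5 ≤ k) (hq : 0 < q) :
    ∃ L, ValidInput L ∧ 10 * (k * q) ≤ OPT k L ∧ OPT k L ≤ 10 * (k * q) + 5 ∧
      FF k L + 30 * q = 27 * (k * q) := by
  obtain ⟨r, rfl⟩ : ∃ r, k = r + 3 := ⟨k - 3, by omega⟩
  obtain ⟨m, hm⟩ : ∃ m, (r + 3) * q = m + 1 := Nat.exists_eq_succ_of_ne_zero (by positivity)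
  have hδ := δ_pos m
  set h : ℝ := 1 / 2 + δ m / 2 with hh
  set t : ℝ := δ m / 2 / (r + 3 : ℕ) with ht
  have ht_pos : 0 < t := by positivity
  have hkt : (r + 3 : ℕ) * t = δ m / 2 := by rw [ht]; field_simp
  have hp : 10 * r * q * (r + 3) = 10 * (m + 1) * r := by rw [← hm]; ring
  have hbin := isBin_of_mem_inputGroups (p := 10 * r * q) (M := m + 1) hk ht_pos
    (by linarith [δ_le m]) (by linarith : 0 < h) (by linarith [δ_le m])
  have hvalid := validInput_flatten hbin
  have hlength := length_le_mul_OPT (k := r + 3) (by omega) hvalid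
  rw [length_flatten_inputGroups, hp] at hlength
  refine ⟨_, hvalid, ?_, ?_, ?_⟩
  · rw [hm]
    exact Nat.le_of_mul_le_mul_left (by linarith : (r + 3) * _ ≤ (r + 3) * _) (by omega)
  · rw [hm]
    refine OPT_le_of_packs (packs_flatten_inputGroups hp ?_)
    push_cast at hkt
    linarith
  · rw [FF_flatten hbin (pairwise_blocks_inputGroups (by linarith)), length_inputGroups,
      ← hm]
    ring

theorem exists_validInput_ratio_mul_OPT_le {k q : ℕ} (hk : 5 ≤ k) (hq : 0 < q) :
    ∃ L, ValidInput L ∧ q ≤ OPT k L ∧ (2.7 - 3 / k : ℝ) * OPT k L ≤ FF k L + 13.5 := by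
  obtain ⟨L, hL, hlower, hupper, hFF⟩ := exists_validInput_FF_eq hk hq
  refine ⟨L, hL, by nlinarith, ?_⟩
  have hk' : (5 : ℝ) ≤ k := by exact_mod_cast hk
  have hinv : 3 / (k : ℝ) * k = 3 := by field_simp
  have hinv_le : 3 / (k : ℝ) ≤ 3 / 5 := by gcongr
  have hinv_pos : 0 < 3 / (k : ℝ) := by positivity
  have hFF' : (FF k L : ℝ) + 30 * q = 27 * (k * q) := by exact_mod_cast hFF
  calc (2.7 - 3 / k : ℝ) * OPT k L ≤ (2.7 - 3 / k) * (10 * (k * q) + 5) := by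
        gcongr
        · linarith
        · exact_mod_cast hupper
    _ = FF k L + 13.5 - 5 * (3 / k) := by
        linear_combination (-10 * q : ℝ) * hinv - hFF'
    _ ≤ FF k L + 13.5 := by linarith

theorem ff_lb_large_k_general (k : ℕ) (hk : 5 ≤ k) (ε : ℝ) (hε : 0 < ε) (N : ℕ) :
    ∃ L : List ℝ, ValidInput L ∧ N ≤ OPT k L ∧
      ((2.7 : ℝ) - 3 / k - ε) * (OPT k L : ℝ) ≤ (FF k L : ℝ) := by
  obtain ⟨n, hn⟩ := exists_nat_ge (13.5 / ε)
  obtain ⟨L, hL, hOPT, hratio⟩ := exists_validInput_ratio_mul_OPT_le hk (N + n).succ_pos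
  have herror : 13.5 ≤ ε * OPT k L := by
    rw [← div_le_iff₀' hε]
    exact hn.trans (by exact_mod_cast (by omega : n ≤ OPT k L))
  exact ⟨L, hL, by omega, by linarith⟩

/-- For k ≥ 10, every ε > 0 and every N there is an input `L` with
OPT(L) ≥ N and FF(L) ≥ (2.7 − 3/k − ε)·OPT(L): the asymptotic competitive ratio of
First Fit for k ≥ 10 is at least 2.7 − 3/k. -/
theorem ff_lb_large_k (k : ℕ) (hk : 10 ≤ k) (ε : ℝ) (hε : 0 < ε) (N : ℕ) :
    ∃ L : List ℝ, ValidInput L ∧ N ≤ OPT k L ∧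
      ((2.7 : ℝ) - 3 / k - ε) * (OPT k L : ℝ) ≤ (FF k L : ℝ) :=
  ff_lb_large_k_general k (by omega) ε hε N
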